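/- arXiv:1812.10582 — 7 statements merged into one kernel-verified Lean document; each statement's English description precedes it below -/
import Mathlib

section
/- Let v1, v2, v3 ∈ ℝ² be three non-collinear points, let σ > 0, let w_ij = exp(−‖v_i − v_j‖² / (2σ²)) for each pair, and let δ = min(w12, w13, w23). For each pair {i,j} ⊆ {1,2,3} let p_{ij} = (1/π)·∫₀^π P_{ij}(φ) dφ be the probability that the pair {i,j} survives the projected random cut. Then p12·w12 + p13·w13 + p23·w23 ≥ ((1+δ)/3)·max(w12, w13, w23). -/
open Real MeasureTheory

/-- Projection of a point of `ℝ²` onto the unit direction `(cos φ, sin φ)`. -/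
noncomputable def proj (v : EuclideanSpace ℝ (Fin 2)) (φ : ℝ) : ℝ :=
  v 0 * Real.cos φ + v 1 * Real.sin φ

/-- Probability that a uniformly random cut point in the projected range separates the point
projecting to `xm` from the pair projecting to `xi, xj`, i.e. that the pair `{i,j}` survives:
if `xm` is strictly smaller (or strictly larger) than both `xi` and `xj`, it is the distance
from `xm` to the nearest of `xi, xj` divided by the total range; otherwise it is `0`. -/
noncomputable def cutProb (xi xj xm : ℝ) : ℝ :=
  if (xm < xi ∧ xm < xj) ∨ (xi < xm ∧ xj < xm) then
    min |xm - xi| |xm - xj| / (max xi (max xj xm) - min xi (min xj xm))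
  else 0

/-- `p_{ij}`: the probability that the pair `{vi, vj}` (third point `vm`) survives the
projected random cut, averaged over a uniform projection angle `φ ∈ [0, π)`. -/
noncomputable def survProb (vi vj vm : EuclideanSpace ℝ (Fin 2)) : ℝ :=
  (1 / Real.pi) * ∫ φ in (0:ℝ)..Real.pi, cutProb (proj vi φ) (proj vj φ) (proj vm φ)

/-!
Fix two edges at a common vertex, of lengths `r ≤ R`. Reflecting the direction of projection in
the bisector of the edges swaps the two cosines, so it turns the projected edges `r p` and `R q`
into `r q` and `R p`. After rescaling, the survival of the long edge in the reflected direction and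
that of the short edge in the original one differ only in how far out the third point lies,
which favours the short edge. Averaging over all directions, shorter edges survive with greater
probability. They also have greater weight, so Chebyshev's sum inequality bounds the expected
surviving weight below by the mean `(w₁₂ + w₁₃ + w₂₃) / 3`, because the three survival
probabilities add up to `1`. For weights in `[0, 1]`, their sum is at least the largest plus the
smallest of them, hence at least `(1 + δ) * max w₁₂ (max w₁₃ w₂₃)`.
-/

/-- The length of the range of three reals: the denominator in `cutProb`. -/
noncomputable def spread (a b c : ℝ) : ℝ :=
  max a (max b c) - min a (min b c)

lemma abs_sub_le_spread (a b c : ℝ) : |a - b| ≤ spread a b c := by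
  unfold spread
  grind [abs_cases]

lemma spread_nonneg (a b c : ℝ) : 0 ≤ spread a b c :=
  (abs_nonneg _).trans (abs_sub_le_spread a b c)

lemma spread_eq_zero_iff {a b c : ℝ} : spread a b c = 0 ↔ a = b ∧ a = c := by
  unfold spread
  grind

lemma spread_left_comm (a b c : ℝ) : spread b a c = spread a b c := by
  unfold spread
  rw [max_left_comm, min_left_comm]

lemma spread_right_comm (a b c : ℝ) : spread a c b = spread a b c := by
  unfold spread
  rw [max_comm c, min_comm c]

lemma two_mul_spread (a b c : ℝ) : 2 * spread a b c = |a - b| + |a - c| + |b - c| := by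
  unfold spread
  grind [abs_cases]

lemma spread_add_left (t a b c : ℝ) : spread (t + a) (t + b) (t + c) = spread a b c := by
  simp only [spread, max_add_add_left, min_add_add_left, add_sub_add_left_eq_sub]

lemma spread_mul_left (t a b c : ℝ) : spread (t * a) (t * b) (t * c) = |t| * spread a b c := by
  have h := two_mul_spread (t * a) (t * b) (t * c)
  simp only [← mul_sub, abs_mul] at h
  linear_combination h / 2 - |t| / 2 * two_mul_spread a b c

lemma monotoneOn_spread_zero_mul (u x : ℝ) :
    MonotoneOn (fun t ↦ spread 0 u (t * x)) (Set.Ici 0) := by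
  intro s hs t _ hst
  rw [Set.mem_Ici] at hs
  rcases le_total 0 x with hx | hx
  · have h : s * x ≤ t * x := mul_le_mul_of_nonneg_right hst hx
    have h0 : 0 ≤ s * x := mul_nonneg hs hx
    simp only [spread]
    grind
  · have h : t * x ≤ s * x := mul_le_mul_of_nonpos_right hst hx
    have h0 : s * x ≤ 0 := mul_nonpos_of_nonneg_of_nonpos hs hx
    simp only [spread]
    grind

-- If `a = b = c`, both sides are `0`: the right-hand side is then `0 / 0`.
lemma cutProb_eq_div (a b c : ℝ) :
    cutProb a b c = (spread a b c - |a - b|) / spread a b c := by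
  unfold cutProb
  split_ifs with hc
  · have h : min |c - a| |c - b| = spread a b c - |a - b| := by
      unfold spread
      grind [abs_cases]
    rw [h, spread]
  · have h : spread a b c = |a - b| := by
      unfold spread
      grind [abs_cases]
    rw [h, sub_self, zero_div]

lemma cutProb_nonneg (a b c : ℝ) : 0 ≤ cutProb a b c := by
  rw [cutProb_eq_div]
  exact div_nonneg (sub_nonneg.mpr (abs_sub_le_spread a b c)) (spread_nonneg a b c)

lemma cutProb_le_one (a b c : ℝ) : cutProb a b c ≤ 1 := by
  rw [cutProb_eq_div]
  exact div_le_one_of_le₀ (sub_le_self _ (abs_nonneg _)) (spread_nonneg a b c)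

lemma cutProb_comm (a b c : ℝ) : cutProb a b c = cutProb b a c := by
  rw [cutProb_eq_div, cutProb_eq_div, spread_left_comm, abs_sub_comm]

lemma cutProb_add_left (t a b c : ℝ) : cutProb (t + a) (t + b) (t + c) = cutProb a b c := by
  rw [cutProb_eq_div, cutProb_eq_div, spread_add_left, add_sub_add_left_eq_sub]

lemma cutProb_mul_left {t : ℝ} (ht : t ≠ 0) (a b c : ℝ) :
    cutProb (t * a) (t * b) (t * c) = cutProb a b c := by
  rw [cutProb_eq_div, cutProb_eq_div, spread_mul_left, ← mul_sub, abs_mul, ← mul_sub,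
    mul_div_mul_left _ _ (abs_ne_zero.mpr ht)]

lemma cutProb_add_cutProb_add_cutProb {a b c : ℝ} (h : ¬(a = b ∧ a = c)) :
    cutProb a b c + cutProb a c b + cutProb b c a = 1 := by
  have hne : spread a b c ≠ 0 := mt spread_eq_zero_iff.mp h
  have hrot : spread b c a = spread a b c := by rw [spread_right_comm, spread_left_comm]
  rw [cutProb_eq_div, cutProb_eq_div, cutProb_eq_div, spread_right_comm a b c, hrot,
    ← add_div, ← add_div, div_eq_one_iff_eq hne]
  linear_combination two_mul_spread a b c

lemma monotoneOn_cutProb_zero_mul (u x : ℝ) :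
    MonotoneOn (fun t ↦ cutProb 0 u (t * x)) (Set.Ici 0) := by
  intro s hs t ht hst
  rcases (spread_nonneg 0 u (s * x)).eq_or_lt with h0 | hpos
  · simpa only [cutProb_eq_div 0 u (s * x), ← h0, div_zero] using cutProb_nonneg 0 u (t * x)
  · have hle : spread 0 u (s * x) ≤ spread 0 u (t * x) :=
      monotoneOn_spread_zero_mul u x hs ht hst
    simp only [cutProb_eq_div, sub_div, div_self hpos.ne', div_self (hpos.trans_le hle).ne']
    gcongr

lemma cutProb_zero_mul_le_cutProb_zero_mul {r R : ℝ} (hr : 0 ≤ r) (hrR : r ≤ R) (p q : ℝ) :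
    cutProb 0 (R * p) (r * q) ≤ cutProb 0 (r * p) (R * q) := by
  rcases hr.eq_or_lt with rfl | hr
  · have h : cutProb 0 (R * p) (0 * q) = 0 := by simp [cutProb]
    exact h.trans_le (cutProb_nonneg _ _ _)
  have hR : 0 < R := hr.trans_le hrR
  calc cutProb 0 (R * p) (r * q)
      = cutProb 0 (r * R * p) (r ^ 2 * q) := by
        rw [← cutProb_mul_left hr.ne' 0, mul_zero, sq, mul_assoc, mul_assoc]
    _ ≤ cutProb 0 (r * R * p) (R ^ 2 * q) :=
        monotoneOn_cutProb_zero_mul _ q (sq_nonneg r) (sq_nonneg R) (pow_le_pow_left₀ hr.le hrR 2)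
    _ = cutProb 0 (r * p) (R * q) := by
        rw [← cutProb_mul_left hR.ne' 0 (r * p), mul_zero, sq, mul_comm r R, mul_assoc, mul_assoc]

lemma continuous_proj (v : EuclideanSpace ℝ (Fin 2)) : Continuous (proj v) := by
  unfold proj
  fun_prop

lemma proj_sub (v w : EuclideanSpace ℝ (Fin 2)) (φ : ℝ) :
    proj (v - w) φ = proj v φ - proj w φ := by
  simp only [proj, PiLp.sub_apply]
  ring

lemma proj_add_pi (v : EuclideanSpace ℝ (Fin 2)) (φ : ℝ) : proj v (φ + π) = -proj v φ := by
  simp only [proj, cos_add_pi, sin_add_pi]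
  ring

lemma exists_proj_eq_norm_mul_cos (v : EuclideanSpace ℝ (Fin 2)) :
    ∃ θ, ∀ φ, proj v φ = ‖v‖ * cos (θ - φ) := by
  let z : ℂ := ⟨v 0, v 1⟩
  have hz : ‖z‖ = ‖v‖ := by
    simp only [z, Complex.norm_eq_sqrt_sq_add_sq, EuclideanSpace.norm_eq, Fin.sum_univ_two,
      Real.norm_eq_abs, sq_abs]
  refine ⟨z.arg, fun φ ↦ ?_⟩
  rw [← hz, cos_sub, mul_add, ← mul_assoc, ← mul_assoc, Complex.norm_mul_cos_arg,
    Complex.norm_mul_sin_arg, proj]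

lemma countable_proj_eq_zero {v : EuclideanSpace ℝ (Fin 2)} (hv : v ≠ 0) :
    {φ | proj v φ = 0}.Countable := by
  obtain ⟨θ, hθ⟩ := exists_proj_eq_norm_mul_cos v
  refine (Set.countable_range fun k : ℤ ↦ θ - (2 * k + 1) * π / 2).mono fun φ hφ ↦ ?_
  have hcos : cos (θ - φ) = 0 := by
    exact (mul_eq_zero.mp ((hθ φ).symm.trans hφ)).resolve_left (norm_ne_zero_iff.mpr hv)
  obtain ⟨k, hk⟩ := cos_eq_zero_iff.mp hcos
  exact ⟨k, by dsimp only; linarith⟩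

lemma ae_proj_ne_proj {v w : EuclideanSpace ℝ (Fin 2)} (h : v ≠ w) :
    ∀ᵐ φ : ℝ, proj v φ ≠ proj w φ := by
  filter_upwards [(countable_proj_eq_zero (sub_ne_zero.mpr h)).ae_notMem volume] with φ hφ heq
  exact hφ ((proj_sub v w φ).trans (sub_eq_zero.mpr heq))

/-- The paper's `P_{ij}(φ)`: the probability that the pair `{vi, vj}` (third point `vm`) survives
the random cut of the projections in direction `φ`. -/
noncomputable def cutProbAt (vi vj vm : EuclideanSpace ℝ (Fin 2)) (φ : ℝ) : ℝ :=
  cutProb (proj vi φ) (proj vj φ) (proj vm φ)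

section

variable (a b c : EuclideanSpace ℝ (Fin 2))

lemma survProb_eq_integral_cutProbAt :
    survProb a b c = 1 / π * ∫ φ in (0 : ℝ)..π, cutProbAt a b c φ := rfl

lemma cutProbAt_eq_cutProb_zero (φ : ℝ) :
    cutProbAt a b c φ = cutProb 0 (proj (b - a) φ) (proj (c - a) φ) := by
  rw [cutProbAt, ← cutProb_add_left (proj a φ) 0, add_zero, proj_sub, proj_sub, add_sub_cancel,
    add_sub_cancel]

lemma measurable_cutProbAt : Measurable (cutProbAt a b c) := by
  have ha := (continuous_proj a).measurable
  have hb := (continuous_proj b).measurable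
  have hc := (continuous_proj c).measurable
  unfold cutProbAt
  simp only [cutProb_eq_div, spread]
  fun_prop

lemma intervalIntegrable_cutProbAt (x y : ℝ) :
    IntervalIntegrable (cutProbAt a b c) volume x y := by
  have hbound (φ : ℝ) : ‖cutProbAt a b c φ‖ ≤ 1 :=
    (norm_of_nonneg (cutProb_nonneg _ _ _)).trans_le (cutProb_le_one _ _ _)
  exact (intervalIntegrable_const (c := (1 : ℝ))).mono_fun'
    (measurable_cutProbAt a b c).aestronglyMeasurable (.of_forall hbound)

lemma periodic_cutProbAt : Function.Periodic (cutProbAt a b c) π := by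
  intro φ
  have h := cutProb_mul_left (neg_ne_zero.mpr one_ne_zero) (proj a φ) (proj b φ) (proj c φ)
  simpa only [cutProbAt, proj_add_pi, neg_one_mul] using h

lemma survProb_comm : survProb a b c = survProb b a c := by
  simp only [survProb, cutProb_comm (proj a _)]

end

lemma intervalIntegral_comp_sub_left_of_periodic {E : Type*} [NormedAddCommGroup E]
    [NormedSpace ℝ E] {f : ℝ → E} {T : ℝ} (hf : Function.Periodic f T) (s : ℝ) :
    ∫ x in (0 : ℝ)..T, f (s - x) = ∫ x in (0 : ℝ)..T, f x := by
  rw [intervalIntegral.integral_comp_sub_left]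
  simpa using hf.intervalIntegral_add_eq (s - T) 0

section

variable {a b c : EuclideanSpace ℝ (Fin 2)}

lemma survProb_add_survProb_add_survProb (h : ¬(a = b ∧ a = c)) :
    survProb a b c + survProb a c b + survProb b c a = 1 := by
  have hae : ∀ᵐ φ : ℝ, cutProbAt a b c φ + cutProbAt a c b φ + cutProbAt b c a φ = 1 := by
    rcases not_and_or.mp h with h | h <;> filter_upwards [ae_proj_ne_proj h] with φ hφ
    · exact cutProb_add_cutProb_add_cutProb fun heq ↦ hφ heq.1
    · exact cutProb_add_cutProb_add_cutProb fun heq ↦ hφ heq.2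
  have hint : ∫ φ in (0 : ℝ)..π,
      (cutProbAt a b c φ + cutProbAt a c b φ + cutProbAt b c a φ) = π := by
    rw [intervalIntegral.integral_congr_ae (g := fun _ ↦ 1) (hae.mono fun φ hφ _ ↦ hφ)]
    simp
  rw [intervalIntegral.integral_add, intervalIntegral.integral_add] at hint
  · simp only [survProb_eq_integral_cutProbAt, ← mul_add, hint]
    exact one_div_mul_cancel pi_ne_zero
  all_goals simp only [intervalIntegrable_cutProbAt, IntervalIntegrable.add]

lemma exists_forall_cutProbAt_sub_le (h : ‖b - a‖ ≤ ‖c - a‖) :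
    ∃ s, ∀ φ, cutProbAt a c b (s - φ) ≤ cutProbAt a b c φ := by
  obtain ⟨θ, hθ⟩ := exists_proj_eq_norm_mul_cos (b - a)
  obtain ⟨ψ, hψ⟩ := exists_proj_eq_norm_mul_cos (c - a)
  refine ⟨θ + ψ, fun φ ↦ ?_⟩
  have hθ' : cos (θ - (θ + ψ - φ)) = cos (ψ - φ) := by rw [← cos_neg]; ring_nf
  have hψ' : cos (ψ - (θ + ψ - φ)) = cos (θ - φ) := by rw [← cos_neg]; ring_nf
  simp only [cutProbAt_eq_cutProb_zero, hθ, hψ, hθ', hψ']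
  exact cutProb_zero_mul_le_cutProb_zero_mul (norm_nonneg _) h _ _

lemma survProb_le_survProb (h : ‖a - b‖ ≤ ‖a - c‖) : survProb a c b ≤ survProb a b c := by
  rw [norm_sub_rev a b, norm_sub_rev a c] at h
  obtain ⟨s, hs⟩ := exists_forall_cutProbAt_sub_le h
  rw [survProb_eq_integral_cutProbAt, survProb_eq_integral_cutProbAt,
    ← intervalIntegral_comp_sub_left_of_periodic (periodic_cutProbAt a c b) s]
  gcongr
  refine intervalIntegral.integral_mono pi_pos.le ?_ (intervalIntegrable_cutProbAt a b c _ _) hs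
  simpa using (intervalIntegrable_cutProbAt a c b s (s - π)).comp_sub_left s

lemma survProb_sub_mul_antitone_sub_nonneg {k : ℝ → ℝ} (hk : AntitoneOn k (Set.Ici 0)) :
    0 ≤ (survProb a b c - survProb a c b) * (k ‖a - b‖ - k ‖a - c‖) := by
  rcases le_total ‖a - b‖ ‖a - c‖ with h | h
  · exact mul_nonneg (sub_nonneg.mpr (survProb_le_survProb h))
      (sub_nonneg.mpr (hk (norm_nonneg _) (norm_nonneg _) h))
  · exact mul_nonneg_of_nonpos_of_nonpos (sub_nonpos.mpr (survProb_le_survProb h))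
      (sub_nonpos.mpr (hk (norm_nonneg _) (norm_nonneg _) h))

end

theorem stmt0_general {k : ℝ → ℝ} (hk : AntitoneOn k (Set.Ici 0))
    {v1 v2 v3 : EuclideanSpace ℝ (Fin 2)} (hne : ¬(v1 = v2 ∧ v1 = v3)) :
    (k ‖v1 - v2‖ + k ‖v1 - v3‖ + k ‖v2 - v3‖) / 3
      ≤ survProb v1 v2 v3 * k ‖v1 - v2‖ + survProb v1 v3 v2 * k ‖v1 - v3‖
        + survProb v2 v3 v1 * k ‖v2 - v3‖ := by
  have hsum := survProb_add_survProb_add_survProb hne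
  have hcmp1 := survProb_sub_mul_antitone_sub_nonneg hk (a := v1) (b := v2) (c := v3)
  have hcmp2 := survProb_sub_mul_antitone_sub_nonneg hk (a := v2) (b := v1) (c := v3)
  have hcmp3 := survProb_sub_mul_antitone_sub_nonneg hk (a := v3) (b := v1) (c := v2)
  rw [survProb_comm v2 v1 v3, norm_sub_rev v2 v1] at hcmp2
  rw [survProb_comm v3 v1 v2, survProb_comm v3 v2 v1, norm_sub_rev v3 v1, norm_sub_rev v3 v2]
    at hcmp3
  linear_combination
    (hcmp1 + hcmp2 + hcmp3) / 3 - (k ‖v1 - v2‖ + k ‖v1 - v3‖ + k ‖v2 - v3‖) / 3 * hsum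

lemma antitoneOn_exp_neg_sq_div (σ : ℝ) :
    AntitoneOn (fun r ↦ exp (-r ^ 2 / (2 * σ ^ 2))) (Set.Ici 0) := by
  intro r hr s _ hrs
  rw [Set.mem_Ici] at hr
  dsimp only
  gcongr

lemma exp_neg_sq_div_mem_Icc (σ r : ℝ) : exp (-r ^ 2 / (2 * σ ^ 2)) ∈ Set.Icc 0 1 :=
  ⟨exp_nonneg _, exp_le_one_iff.mpr
    (div_nonpos_of_nonpos_of_nonneg (neg_nonpos.mpr (sq_nonneg r)) (by positivity))⟩

lemma one_add_min_div_three_mul_max_le {x y z : ℝ} (hx : x ∈ Set.Icc 0 1) (hy : y ∈ Set.Icc 0 1)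
    (hz : z ∈ Set.Icc 0 1) :
    (1 + min x (min y z)) / 3 * max x (max y z) ≤ (x + y + z) / 3 := by
  have hmin : 0 ≤ min x (min y z) := le_min hx.1 (le_min hy.1 hz.1)
  have hmax : max x (max y z) ≤ 1 := max_le hx.2 (max_le hy.2 hz.2)
  have hmul : min x (min y z) * max x (max y z) ≤ min x (min y z) :=
    mul_le_of_le_one_right hmin hmax
  have hadd : max x (max y z) + min x (min y z) ≤ x + y + z := by grind
  linarith

lemma not_eq_and_eq_of_not_collinear {K V P : Type*} [DivisionRing K] [AddCommGroup V] [Module K V]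
    [AddTorsor V P] {a b c : P} (h : ¬Collinear K {a, b, c}) : ¬(a = b ∧ a = c) := by
  rintro ⟨rfl, rfl⟩
  exact h (by simpa using collinear_singleton K a)

theorem stmt0 (v1 v2 v3 : EuclideanSpace ℝ (Fin 2))
    (hcol : ¬ Collinear ℝ ({v1, v2, v3} : Set (EuclideanSpace ℝ (Fin 2))))
    (σ : ℝ) (hσ : 0 < σ)
    (w12 w13 w23 δ : ℝ)
    (hw12 : w12 = Real.exp (-‖v1 - v2‖ ^ 2 / (2 * σ ^ 2)))
    (hw13 : w13 = Real.exp (-‖v1 - v3‖ ^ 2 / (2 * σ ^ 2)))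
    (hw23 : w23 = Real.exp (-‖v2 - v3‖ ^ 2 / (2 * σ ^ 2)))
    (hδ : δ = min w12 (min w13 w23)) :
    survProb v1 v2 v3 * w12 + survProb v1 v3 v2 * w13 + survProb v2 v3 v1 * w23
      ≥ ((1 + δ) / 3) * max w12 (max w13 w23) := by
  subst hw12 hw13 hw23 hδ
  exact (one_add_min_div_three_mul_max_le (exp_neg_sq_div_mem_Icc σ _) (exp_neg_sq_div_mem_Icc σ _)
    (exp_neg_sq_div_mem_Icc σ _)).trans
    (stmt0_general (antitoneOn_exp_neg_sq_div σ) (not_eq_and_eq_of_not_collinear hcol))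
end

section
/- For every real ε ∈ (0,1) and every simple graph G on vertex set {1,…,n} with n ≥ 5, there exist a dimension d ≤ n², unit vectors k_1, …, k_n ∈ ℝ^d, a bandwidth σ > 0 with 1/σ² = n·log(1/ε), and a real α > 0 such that exp(−‖k_u − k_v‖²/(2σ²)) = α for every edge (u,v) of G, and exp(−‖k_u − k_v‖²/(2σ²)) = α·ε for every pair of distinct non-adjacent vertices u, v. -/
/-!
If `A` is the adjacency matrix of a graph whose degrees are at most `c`, then `1 + c⁻¹ • A` is
symmetric and diagonally dominant, hence by Gershgorin's theorem positive semidefinite, hence the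
Gram matrix of a family of vectors. Its entries say that these are unit vectors with inner product
`c⁻¹` along the edges and `0` between distinct non-adjacent vertices. Unit vectors satisfy
`‖u - v‖² = 2 (1 - ⟪u, v⟫)`, so with `1 / σ² = c log (1 / ε)` their Gaussian similarity is
`ε ^ (c (1 - ⟪u, v⟫))`: it is `ε ^ (c - 1)` along the edges and `ε ^ c` otherwise.
-/

open Matrix
open scoped InnerProductSpace

section Matrix

variable {𝕜 n : Type*} [RCLike 𝕜] [Fintype n] {A : Matrix n n 𝕜}

open scoped ComplexOrder in
theorem posSemidef_of_sum_row_le_diag [DecidableEq n] (hA : A.IsHermitian)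
    (hdom : ∀ i, ∑ j ∈ Finset.univ.erase i, ‖A i j‖ ≤ RCLike.re (A i i)) : A.PosSemidef := by
  refine hA.posSemidef_iff_eigenvalues_nonneg.mpr fun i ↦ ?_
  have heig : Module.End.HasEigenvalue (toLin' A) (hA.eigenvalues i : 𝕜) := by
    refine .of_mem_spectrum ?_
    rw [spectrum_toLin', hA.spectrum_eq_image_range]
    exact ⟨_, ⟨i, rfl⟩, rfl⟩
  obtain ⟨k, hk⟩ := eigenvalue_mem_ball heig
  have hre : RCLike.re (A k k) - hA.eigenvalues i ≤ RCLike.re (A k k) :=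
    calc RCLike.re (A k k) - hA.eigenvalues i
        = RCLike.re (A k k - (hA.eigenvalues i : 𝕜)) := by simp
      _ ≤ ‖A k k - (hA.eigenvalues i : 𝕜)‖ := RCLike.re_le_norm _
      _ ≤ ∑ j ∈ Finset.univ.erase k, ‖A k j‖ := mem_closedBall_iff_norm'.mp hk
      _ ≤ RCLike.re (A k k) := hdom k
  simpa using hre

open scoped ComplexOrder MatrixOrder in
theorem exists_gram_eq_of_posSemidef (hA : A.PosSemidef) :
    ∃ v : n → EuclideanSpace 𝕜 n, gram 𝕜 v = A := by
  classical
  obtain ⟨B, rfl⟩ := CStarAlgebra.nonneg_iff_eq_star_mul_self.mp hA.nonneg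
  refine ⟨fun i ↦ WithLp.toLp 2 (B.col i), ?_⟩
  rw [gram_eq_conjTranspose_mul (EuclideanSpace.basisFun n 𝕜)]
  rfl

end Matrix

section Graph

variable {V : Type*} [Fintype V] (G : SimpleGraph V) [DecidableRel G.Adj] {c : ℝ}

theorem posSemidef_one_add_inv_smul_adjMatrix [DecidableEq V] (hdeg : ∀ v, (G.degree v : ℝ) ≤ c) :
    (1 + c⁻¹ • G.adjMatrix ℝ).PosSemidef := by
  have hsymm : (1 + c⁻¹ • G.adjMatrix ℝ).IsHermitian :=
    isHermitian_iff_isSymm.mpr (isSymm_one.add (G.isSymm_adjMatrix.smul c⁻¹))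
  refine posSemidef_of_sum_row_le_diag hsymm fun v ↦ ?_
  have hc : 0 ≤ c := (Nat.cast_nonneg _).trans (hdeg v)
  calc ∑ w ∈ Finset.univ.erase v, ‖(1 + c⁻¹ • G.adjMatrix ℝ) v w‖
      = ∑ w ∈ Finset.univ.erase v, c⁻¹ * G.adjMatrix ℝ v w := by
        refine Finset.sum_congr rfl fun w hw ↦ ?_
        have hvw : v ≠ w := (Finset.ne_of_mem_erase hw).symm
        by_cases hadj : G.Adj v w <;> simp [hvw, hadj, abs_of_nonneg hc]
    _ = c⁻¹ * G.degree v := by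
        rw [Finset.sum_erase _ (by simp), ← Finset.mul_sum]
        simp [SimpleGraph.adjMatrix_apply, ← G.card_neighborFinset_eq_degree,
          G.neighborFinset_eq_filter]
    _ ≤ 1 := inv_mul_le_one_of_le₀ (hdeg v) hc
    _ = RCLike.re ((1 + c⁻¹ • G.adjMatrix ℝ) v v) := by simp

theorem exists_unit_vectors_inner_eq_inv_mul_adjMatrix (hdeg : ∀ v, (G.degree v : ℝ) ≤ c) :
    ∃ k : V → EuclideanSpace ℝ V, (∀ u, ‖k u‖ = 1) ∧
      ∀ u v, u ≠ v → ⟪k u, k v⟫_ℝ = c⁻¹ * G.adjMatrix ℝ u v := by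
  classical
  obtain ⟨k, hk⟩ := exists_gram_eq_of_posSemidef (posSemidef_one_add_inv_smul_adjMatrix G hdeg)
  have hinner (u v : V) : ⟪k u, k v⟫_ℝ = (1 + c⁻¹ • G.adjMatrix ℝ) u v := congrFun₂ hk u v
  refine ⟨k, fun u ↦ ?_, fun u v huv ↦ ?_⟩
  · have hself : ⟪k u, k u⟫_ℝ = 1 := by simpa using hinner u u
    rw [norm_eq_sqrt_real_inner, hself, Real.sqrt_one]
  · simpa [huv] using hinner u v

end Graph

section GaussianKernel

variable {E : Type*} [SeminormedAddCommGroup E]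

/-- The Gaussian kernel similarity with bandwidth `σ` between two vectors; for `σ = 0` the
convention `x / 0 = 0` makes it constantly `1`. -/
noncomputable def gaussianKernel (σ : ℝ) (u v : E) : ℝ :=
  Real.exp (-‖u - v‖ ^ 2 / (2 * σ ^ 2))

theorem gaussianKernel_eq_rpow_of_norm_eq_one [InnerProductSpace ℝ E] {ε c σ : ℝ} {u v : E}
    (hε : 0 < ε) (hσ : 1 / σ ^ 2 = c * Real.log (1 / ε)) (hu : ‖u‖ = 1) (hv : ‖v‖ = 1) :
    gaussianKernel σ u v = ε ^ (c * (1 - ⟪u, v⟫_ℝ)) := by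
  have hdist : ‖u - v‖ ^ 2 = 2 * (1 - ⟪u, v⟫_ℝ) := by
    rw [norm_sub_sq_real, hu, hv]
    ring
  rw [gaussianKernel, Real.rpow_def_of_pos hε, hdist]
  rw [one_div ε, Real.log_inv] at hσ
  congr 1
  linear_combination (⟪u, v⟫_ℝ - 1) * hσ

end GaussianKernel

theorem stmt3_general {V : Type*} [Fintype V] (G : SimpleGraph V) [DecidableRel G.Adj] {ε c : ℝ}
    (hε0 : 0 < ε) (hε1 : ε < 1) (hc : 0 < c) (hdeg : ∀ v, (G.degree v : ℝ) ≤ c) :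
    ∃ (k : V → EuclideanSpace ℝ V) (σ α : ℝ),
      0 < σ ∧ 1 / σ ^ 2 = c * Real.log (1 / ε) ∧ 0 < α ∧
      (∀ u, ‖k u‖ = 1) ∧
      (∀ u v, G.Adj u v → gaussianKernel σ (k u) (k v) = α) ∧
      (∀ u v, u ≠ v → ¬ G.Adj u v → gaussianKernel σ (k u) (k v) = α * ε) := by
  obtain ⟨k, hnorm, hinner⟩ := exists_unit_vectors_inner_eq_inv_mul_adjMatrix G hdeg
  have hpos : 0 < c * Real.log (1 / ε) := mul_pos hc (Real.log_pos (one_lt_one_div hε0 hε1))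
  have hσ : 1 / (√(c * Real.log (1 / ε)))⁻¹ ^ 2 = c * Real.log (1 / ε) := by
    rw [inv_pow, one_div, inv_inv, Real.sq_sqrt hpos.le]
  refine ⟨k, (√(c * Real.log (1 / ε)))⁻¹, ε ^ (c - 1), by positivity, hσ, by positivity, hnorm,
    fun u v huv ↦ ?_, fun u v huv hnadj ↦ ?_⟩
  · rw [gaussianKernel_eq_rpow_of_norm_eq_one hε0 hσ (hnorm u) (hnorm v), hinner u v huv.ne]
    simp [huv, mul_sub, hc.ne']
  · rw [gaussianKernel_eq_rpow_of_norm_eq_one hε0 hσ (hnorm u) (hnorm v), hinner u v huv,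
      ← Real.rpow_add_one hε0.ne']
    simp [hnadj]

theorem stmt3 (ε : ℝ) (hε0 : 0 < ε) (hε1 : ε < 1) (n : ℕ) (hn : 5 ≤ n)
    (G : SimpleGraph (Fin n)) :
    ∃ d : ℕ, d ≤ n ^ 2 ∧
      ∃ (k : Fin n → EuclideanSpace ℝ (Fin d)) (σ α : ℝ),
        0 < σ ∧ 1 / σ ^ 2 = n * Real.log (1 / ε) ∧ 0 < α ∧
        (∀ u, ‖k u‖ = 1) ∧
        (∀ u v, G.Adj u v →
          Real.exp (-‖k u - k v‖ ^ 2 / (2 * σ ^ 2)) = α) ∧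
        (∀ u v, u ≠ v → ¬ G.Adj u v →
          Real.exp (-‖k u - k v‖ ^ 2 / (2 * σ ^ 2)) = α * ε) := by
  classical
  have hdeg (v : Fin n) : (G.degree v : ℝ) ≤ n := by
    simpa using (G.degree_lt_card_verts v).le
  exact ⟨n, Nat.le_self_pow two_ne_zero n,
    stmt3_general G hε0 hε1 (Nat.cast_pos.mpr (by lia)) hdeg⟩
end

section
/- For every simple graph G on vertex set {1,…,n} with n ≥ 5, there exist unit vectors k_1, …, k_n ∈ ℝ^{n²} such that the inner product ⟨k_u, k_v⟩ equals 1/n whenever (u,v) is an edge of G, and equals 0 whenever u ≠ v and (u,v) is not an edge of G. -/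
/-!
The matrix `1 + c • A`, with `A` the adjacency matrix of `G`, is symmetric and, as soon as
`|c|` times every degree is at most `1`, diagonally dominant. By Gershgorin's theorem its
eigenvalues are nonnegative, so it is the Gram matrix of a family of vectors, in any inner product
space of dimension at least the number of vertices. For `c = 1 / n` the condition holds because
degrees are less than `n`.
-/

open scoped RealInnerProductSpace

open Module Matrix
open scoped ComplexOrder

section GramRealization

variable {𝕜 E : Type*} [RCLike 𝕜] [NormedAddCommGroup E] [InnerProductSpace 𝕜 E]

theorem exists_orthonormal_of_card_le_finrank {ι : Type*} [Fintype ι]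
    (h : Fintype.card ι ≤ finrank 𝕜 E) : ∃ e : ι → E, Orthonormal 𝕜 e := by
  obtain ⟨f, hf⟩ := exists_linearIndependent_of_le_finrank h
  exact ⟨InnerProductSpace.gramSchmidtNormed 𝕜 f ∘ Fintype.equivFin ι,
    (InnerProductSpace.gramSchmidtNormed_orthonormal hf).comp _ (Equiv.injective _)⟩

theorem exists_gram_eq_of_posSemidef_s4 {ι : Type*} [Fintype ι] {M : Matrix ι ι 𝕜}
    (hM : M.PosSemidef) (h : Fintype.card ι ≤ finrank 𝕜 E) : ∃ k : ι → E, gram 𝕜 k = M := by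
  classical
  obtain ⟨B, rfl⟩ : ∃ B : Matrix ι ι 𝕜, M = Bᴴ * B := by
    open scoped MatrixOrder Matrix.Norms.L2Operator in
    exact CStarAlgebra.nonneg_iff_eq_star_mul_self.mp hM.nonneg
  obtain ⟨e, he⟩ := exists_orthonormal_of_card_le_finrank h
  refine ⟨fun u ↦ ∑ i, B i u • e i, Matrix.ext fun u v ↦ ?_⟩
  simp only [gram_apply, he.inner_sum, mul_apply, conjTranspose_apply, RCLike.star_def]

end GramRealization

section DiagonallyDominant

variable {𝕜 ι : Type*} [RCLike 𝕜] [Fintype ι] [DecidableEq ι]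

theorem posSemidef_of_sum_row_le_diag_s4 {M : Matrix ι ι 𝕜} (hM : M.IsHermitian)
    (hdiag : ∀ i, ∑ j ∈ Finset.univ.erase i, ‖M i j‖ ≤ RCLike.re (M i i)) : M.PosSemidef := by
  refine hM.posSemidef_iff_eigenvalues_nonneg.mpr fun l ↦ ?_
  have hl : End.HasEigenvalue (toLin' M) (hM.eigenvalues l : 𝕜) := by
    rw [End.hasEigenvalue_iff_mem_spectrum, spectrum_toLin']
    simp [hM.spectrum_eq_image_range]
  obtain ⟨i, hi⟩ := eigenvalue_mem_ball hl
  rw [mem_closedBall_iff_norm'] at hi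
  have hre : RCLike.re (M i i) - hM.eigenvalues l ≤ RCLike.re (M i i) :=
    calc RCLike.re (M i i) - hM.eigenvalues l
        = RCLike.re (M i i - (hM.eigenvalues l : 𝕜)) := by simp
      _ ≤ ‖M i i - (hM.eigenvalues l : 𝕜)‖ := RCLike.re_le_norm _
      _ ≤ ∑ j ∈ Finset.univ.erase i, ‖M i j‖ := hi
      _ ≤ RCLike.re (M i i) := hdiag i
  exact (sub_le_self_iff _).mp hre

end DiagonallyDominant

section Graph

variable {V : Type*} [Fintype V] (G : SimpleGraph V) [DecidableRel G.Adj]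

theorem posSemidef_one_add_smul_adjMatrix (𝕜 : Type*) [RCLike 𝕜] [DecidableEq V] {c : ℝ}
    (hc : ∀ v, |c| * G.degree v ≤ 1) : (1 + c • G.adjMatrix 𝕜).PosSemidef := by
  have hherm : (1 + c • G.adjMatrix 𝕜).IsHermitian :=
    isHermitian_one.add ((G.isHermitian_adjMatrix 𝕜).smul (IsSelfAdjoint.all c))
  refine posSemidef_of_sum_row_le_diag_s4 hherm fun u ↦ ?_
  calc ∑ v ∈ Finset.univ.erase u, ‖(1 + c • G.adjMatrix 𝕜) u v‖
      = ∑ v ∈ Finset.univ.erase u, |c| * (if G.Adj u v then 1 else 0) :=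
        Finset.sum_congr rfl fun v hv ↦ by
          by_cases h : G.Adj u v <;>
            simp [one_apply_ne (Finset.ne_of_mem_erase hv).symm, norm_smul, h]
    _ = |c| * G.degree u := by
        rw [Finset.sum_erase _ (by simp), ← Finset.mul_sum, Finset.sum_boole,
          ← G.neighborFinset_eq_filter, G.card_neighborFinset_eq_degree]
    _ ≤ 1 := hc u
    _ = RCLike.re ((1 + c • G.adjMatrix 𝕜) u u) := by simp

theorem abs_one_div_card_mul_degree_le_one (v : V) :
    |1 / (Fintype.card V : ℝ)| * G.degree v ≤ 1 := by
  rw [abs_of_nonneg (by positivity), one_div_mul_eq_div]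
  exact div_le_one_of_le₀ (mod_cast (G.degree_lt_card_verts v).le) (Nat.cast_nonneg _)

theorem stmt4_general {E : Type*} [NormedAddCommGroup E] [InnerProductSpace ℝ E]
    (hE : Fintype.card V ≤ finrank ℝ E) {c : ℝ} (hc : ∀ v, |c| * G.degree v ≤ 1) :
    ∃ k : V → E,
      (∀ u, ‖k u‖ = 1) ∧
      (∀ u v, G.Adj u v → ⟪k u, k v⟫ = c) ∧
      (∀ u v, u ≠ v → ¬ G.Adj u v → ⟪k u, k v⟫ = (0 : ℝ)) := by
  classical
  obtain ⟨k, hk⟩ := exists_gram_eq_of_posSemidef_s4 (posSemidef_one_add_smul_adjMatrix G ℝ hc) hE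
  have inner_eq (u v : V) : ⟪k u, k v⟫ = (1 + c • G.adjMatrix ℝ) u v := congr_fun₂ hk u v
  refine ⟨k, fun u ↦ ?_, fun u v h ↦ ?_, fun u v huv h ↦ ?_⟩
  · rw [norm_eq_sqrt_real_inner, inner_eq]
    simp
  · simp [inner_eq, one_apply_ne h.ne, h]
  · simp [inner_eq, one_apply_ne huv, h]

end Graph

theorem stmt4 (n : ℕ) (hn : 5 ≤ n) (G : SimpleGraph (Fin n)) :
    ∃ k : Fin n → EuclideanSpace ℝ (Fin (n ^ 2)),
      (∀ u, ‖k u‖ = 1) ∧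
      (∀ u v, G.Adj u v → ⟪k u, k v⟫ = 1 / (n : ℝ)) ∧
      (∀ u v, u ≠ v → ¬ G.Adj u v → ⟪k u, k v⟫ = (0 : ℝ)) := by
  classical
  exact stmt4_general G (by simpa using Nat.le_self_pow two_ne_zero n)
    (by simpa using abs_one_div_card_mul_degree_le_one G)
end

section
/- Let a ≤ b ≤ c be real numbers with a < c, and let g : ℝ → ℝ be a monotone non-increasing function. Then g(c − b)·(b − a) + g(b − a)·(c − b) ≥ ((g(b − a) + g(c − b))/2)·(c − a). (Equivalently, for a uniformly random cut point r ∈ [a, c], the expected scored weight for the triple a ≤ b ≤ c under the Random Cut algorithm — which scores g(c − b) if r ∈ [a, b] and g(b − a) if r ∈ [b, c] — is at least half of g(b − a) + g(c − b).) -/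
/-!
The expected score weights each of the gaps `b - a`, `c - b` by the value of `g` at the other gap.
As `g` is antitone, rearrangement says that this crossed pairing is at least the direct one, hence
at least the average of the two, which factors as `(g (b - a) + g (c - b)) / 2 * (c - a)`.
-/

theorem add_mul_add_le_two_mul_of_antivary {ι R : Type*} [Ring R] [LinearOrder R]
    [IsStrictOrderedRing R] {f g : ι → R} (hfg : Antivary f g) (i j : ι) :
    (f i + f j) * (g i + g j) ≤ 2 * (f i * g j + f j * g i) := by
  have rearrangement : f i * g i + f j * g j ≤ f i * g j + f j * g i :=
    hfg.mul_add_mul_le_mul_add_mul i j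
  calc (f i + f j) * (g i + g j)
      = (f i * g i + f j * g j) + (f i * g j + f j * g i) := by noncomm_ring
    _ ≤ (f i * g j + f j * g i) + (f i * g j + f j * g i) := by gcongr
    _ = 2 * (f i * g j + f j * g i) := (two_mul _).symm

theorem stmt7_general {K : Type*} [Field K] [LinearOrder K] [IsStrictOrderedRing K]
    {g : K → K} (hg : Antitone g) (a b c : K) :
    (g (b - a) + g (c - b)) / 2 * (c - a) ≤ g (c - b) * (b - a) + g (b - a) * (c - b) := by
  have crossed : (g (b - a) + g (c - b)) * ((b - a) + (c - b)) ≤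
      2 * (g (b - a) * (c - b) + g (c - b) * (b - a)) :=
    add_mul_add_le_two_mul_of_antivary (hg.antivary monotone_id) (b - a) (c - b)
  calc (g (b - a) + g (c - b)) / 2 * (c - a)
      = (g (b - a) + g (c - b)) * ((b - a) + (c - b)) / 2 := by ring
    _ ≤ g (b - a) * (c - b) + g (c - b) * (b - a) := (div_le_iff₀' two_pos).mpr crossed
    _ = g (c - b) * (b - a) + g (b - a) * (c - b) := add_comm _ _

theorem stmt7 (a b c : ℝ) (hab : a ≤ b) (hbc : b ≤ c) (hac : a < c)
    (g : ℝ → ℝ) (hg : Antitone g) :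
    g (c - b) * (b - a) + g (b - a) * (c - b) ≥ ((g (b - a) + g (c - b)) / 2) * (c - a) :=
  stmt7_general hg a b c
end

section
/- Let θ₁, θ₂, θ₃ be positive reals with θ₁ + θ₂ + θ₃ = π and θ₃ ≤ θ₂, and let θ ∈ (0, θ₁]. Then sin(θ₁ + θ₃)/sin(θ + θ₃) ≥ sin(θ₁ + θ₂)/sin(θ + θ₂); equivalently, (sin θ / sin(θ + θ₃))·(sin(θ₁ + θ₃)/sin θ₁) ≥ (sin θ / sin(θ + θ₂))·(sin(θ₁ + θ₂)/sin θ₁). -/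
/-!
Cross-multiplying, the inequality `sin (y + b) / sin (x + b) ≤ sin (y + a) / sin (x + a)` compares
two products of sines whose difference factors as `sin (y - x) * sin (b - a)`, a product of two
nonnegative sines. The second inequality is the first one multiplied by `sin θ / sin θ₁ ≥ 0`.
-/

open Real

theorem sin_add_mul_sin_add_sub_sin_add_mul_sin_add (x y a b : ℝ) :
    sin (y + a) * sin (x + b) - sin (y + b) * sin (x + a) = sin (y - x) * sin (b - a) := by
  simp only [sin_add, sin_sub]
  ring

theorem sin_add_div_sin_add_le_sin_add_div_sin_add {x y a b : ℝ} (hxy : x ≤ y) (hyx : y - x ≤ π)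
    (hab : a ≤ b) (hxa : 0 < x + a) (hxb : x + b < π) :
    sin (y + b) / sin (x + b) ≤ sin (y + a) / sin (x + a) := by
  have sin_xa_pos : 0 < sin (x + a) := sin_pos_of_pos_of_lt_pi hxa (by linarith)
  have sin_xb_pos : 0 < sin (x + b) := sin_pos_of_pos_of_lt_pi (by linarith) hxb
  have sin_yx_nonneg : 0 ≤ sin (y - x) := sin_nonneg_of_nonneg_of_le_pi (sub_nonneg.2 hxy) hyx
  have sin_ba_nonneg : 0 ≤ sin (b - a) :=
    sin_nonneg_of_nonneg_of_le_pi (sub_nonneg.2 hab) (by linarith)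
  rw [div_le_div_iff₀ sin_xb_pos sin_xa_pos, ← sub_nonneg,
    sin_add_mul_sin_add_sub_sin_add_mul_sin_add]
  exact mul_nonneg sin_yx_nonneg sin_ba_nonneg

theorem stmt9_general {θ₁ θ₂ θ₃ θ : ℝ} (hθ0 : 0 < θ) (hθ1 : θ ≤ θ₁) (h1π : θ₁ < π)
    (h32 : θ₃ ≤ θ₂) (h3 : 0 < θ + θ₃) (h2 : θ + θ₂ < π) :
    sin (θ₁ + θ₃) / sin (θ + θ₃) ≥ sin (θ₁ + θ₂) / sin (θ + θ₂) ∧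
    (sin θ / sin (θ + θ₃)) * (sin (θ₁ + θ₃) / sin θ₁) ≥
      (sin θ / sin (θ + θ₂)) * (sin (θ₁ + θ₂) / sin θ₁) := by
  have ratio_le : sin (θ₁ + θ₂) / sin (θ + θ₂) ≤ sin (θ₁ + θ₃) / sin (θ + θ₃) :=
    sin_add_div_sin_add_le_sin_add_div_sin_add hθ1 (by linarith) h32 h3 h2
  have factor_nonneg : 0 ≤ sin θ / sin θ₁ :=
    div_nonneg (sin_nonneg_of_nonneg_of_le_pi hθ0.le (by linarith))
      (sin_nonneg_of_nonneg_of_le_pi (by linarith) h1π.le)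
  refine ⟨ratio_le, ?_⟩
  calc sin θ / sin (θ + θ₂) * (sin (θ₁ + θ₂) / sin θ₁)
      = sin θ / sin θ₁ * (sin (θ₁ + θ₂) / sin (θ + θ₂)) := by ring
    _ ≤ sin θ / sin θ₁ * (sin (θ₁ + θ₃) / sin (θ + θ₃)) :=
      mul_le_mul_of_nonneg_left ratio_le factor_nonneg
    _ = sin θ / sin (θ + θ₃) * (sin (θ₁ + θ₃) / sin θ₁) := by ring

theorem stmt9 (θ₁ θ₂ θ₃ θ : ℝ)
    (h1 : 0 < θ₁) (h2 : 0 < θ₂) (h3 : 0 < θ₃)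
    (hsum : θ₁ + θ₂ + θ₃ = Real.pi) (h32 : θ₃ ≤ θ₂)
    (hθ0 : 0 < θ) (hθ1 : θ ≤ θ₁) :
    Real.sin (θ₁ + θ₃) / Real.sin (θ + θ₃) ≥ Real.sin (θ₁ + θ₂) / Real.sin (θ + θ₂) ∧
    (Real.sin θ / Real.sin (θ + θ₃)) * (Real.sin (θ₁ + θ₃) / Real.sin θ₁) ≥
      (Real.sin θ / Real.sin (θ + θ₂)) * (Real.sin (θ₁ + θ₂) / Real.sin θ₁) :=
  stmt9_general hθ0 hθ1 (by linarith) h32 (by linarith) (by linarith)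
end

section
/- Fix σ > 0, and for Δ > 0 set w₁ = exp(−Δ²/(2σ²)) and w₄ = exp(−(2Δ)²/(2σ²)) (the Gaussian kernel weights of adjacent and distance-2Δ pairs among the equally spaced points 0, Δ, 2Δ, 3Δ). Then the ratio (3·w₁ + w₄)/(4·w₁) — the value of Dasgupta-type objective F⁺ on the tree produced by average-linkage divided by its value on the balanced tree {{0,Δ},{2Δ,3Δ}} — tends to 3/4 as Δ → ∞. Consequently, for every ε > 0 there exists Δ₀ such that for all Δ ≥ Δ₀, 3·exp(−Δ²/(2σ²)) + exp(−2Δ²/σ²) ≤ (3/4 + ε)·4·exp(−Δ²/(2σ²)). -/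
open Filter

/-! The Gaussian weight satisfies `w(cΔ) = w(Δ) ^ c²`, so for `c > 1` dilating the distance makes
it relatively negligible: `w(cΔ) / w(Δ) = w(Δ) ^ (c² - 1) → 0`. With `c = 2`, the value
`3 w(Δ) + w(2Δ)` of the average-linkage tree is asymptotically `3 w(Δ)`, against `4 w(Δ)` for the
balanced tree. -/

open scoped Topology

/-- The Gaussian kernel similarity, with bandwidth `σ`, of two points at distance `d`. It is taken
as a function of the distance, since the values of the two trees only involve pairs at distance `Δ`
or `2 * Δ`. -/
noncomputable def gaussianWeight (σ d : ℝ) : ℝ :=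
  Real.exp (-d ^ 2 / (2 * σ ^ 2))

theorem gaussianWeight_pos (σ d : ℝ) : 0 < gaussianWeight σ d :=
  Real.exp_pos _

theorem gaussianWeight_mul (σ c d : ℝ) :
    gaussianWeight σ (c * d) = gaussianWeight σ d ^ (c ^ 2) := by
  rw [gaussianWeight, gaussianWeight, ← Real.exp_mul]
  congr 1
  ring

theorem gaussianWeight_two_mul (σ d : ℝ) :
    gaussianWeight σ (2 * d) = Real.exp (-2 * d ^ 2 / σ ^ 2) := by
  rw [gaussianWeight]
  congr 1
  ring

theorem gaussianWeight_mul_div_self (σ c d : ℝ) :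
    gaussianWeight σ (c * d) / gaussianWeight σ d = gaussianWeight σ d ^ (c ^ 2 - 1) := by
  rw [gaussianWeight_mul, Real.rpow_sub_one (gaussianWeight_pos σ d).ne']

theorem tendsto_gaussianWeight_atTop {σ : ℝ} (hσ : σ ≠ 0) :
    Tendsto (gaussianWeight σ) atTop (𝓝 0) := by
  have h_exponent : Tendsto (fun d : ℝ => d ^ 2 / (2 * σ ^ 2)) atTop atTop :=
    (tendsto_pow_atTop two_ne_zero).atTop_div_const (by positivity)
  refine (Real.tendsto_exp_neg_atTop_nhds_zero.comp h_exponent).congr fun d => ?_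
  rw [Function.comp_apply, gaussianWeight, neg_div]

theorem tendsto_gaussianWeight_mul_div_self {σ c : ℝ} (hσ : σ ≠ 0) (hc : 1 < |c|) :
    Tendsto (fun d => gaussianWeight σ (c * d) / gaussianWeight σ d) atTop (𝓝 0) := by
  have h_exponent : 0 < c ^ 2 - 1 := sub_pos.2 ((one_lt_sq_iff_one_lt_abs c).2 hc)
  simpa only [gaussianWeight_mul_div_self, Real.zero_rpow h_exponent.ne'] using
    (tendsto_gaussianWeight_atTop hσ).rpow_const (Or.inr h_exponent.le)

theorem tendsto_add_gaussianWeight_mul_div {σ c : ℝ} (hσ : σ ≠ 0) (hc : 1 < |c|) (a b k : ℝ) :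
    Tendsto (fun d => (a * gaussianWeight σ d + b * gaussianWeight σ (c * d)) /
      (k * gaussianWeight σ d)) atTop (𝓝 (a / k)) := by
  have h_split (d : ℝ) : (a * gaussianWeight σ d + b * gaussianWeight σ (c * d)) /
      (k * gaussianWeight σ d) =
        a / k + b / k * (gaussianWeight σ (c * d) / gaussianWeight σ d) := by
    rw [add_div, mul_div_mul_right _ _ (gaussianWeight_pos σ d).ne', mul_div_mul_comm]
  simpa only [h_split, mul_zero, add_zero] using
    ((tendsto_gaussianWeight_mul_div_self hσ hc).const_mul (b / k)).const_add (a / k)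

theorem eventually_le_mul_of_tendsto_div {α 𝕜 : Type*} [Field 𝕜] [LinearOrder 𝕜]
    [IsStrictOrderedRing 𝕜] [TopologicalSpace 𝕜] [OrderTopology 𝕜] {l : Filter α} {f g : α → 𝕜}
    {L C : 𝕜} (h : Tendsto (fun x => f x / g x) l (𝓝 L)) (hg : ∀ᶠ x in l, 0 < g x) (hC : L < C) :
    ∀ᶠ x in l, f x ≤ C * g x := by
  filter_upwards [h.eventually_le_const hC, hg] with x hx hgx
  exact (div_le_iff₀ hgx).1 hx

theorem stmt12 (σ : ℝ) (hσ : 0 < σ) :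
    Tendsto (fun Δ : ℝ =>
        (3 * Real.exp (-Δ ^ 2 / (2 * σ ^ 2)) + Real.exp (-(2 * Δ) ^ 2 / (2 * σ ^ 2))) /
          (4 * Real.exp (-Δ ^ 2 / (2 * σ ^ 2))))
      atTop (nhds (3 / 4)) ∧
    ∀ ε > (0 : ℝ), ∃ Δ₀ : ℝ, ∀ Δ ≥ Δ₀,
      3 * Real.exp (-Δ ^ 2 / (2 * σ ^ 2)) + Real.exp (-2 * Δ ^ 2 / σ ^ 2) ≤
        (3 / 4 + ε) * (4 * Real.exp (-Δ ^ 2 / (2 * σ ^ 2))) := by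
  have h_ratio : Tendsto (fun Δ => (3 * gaussianWeight σ Δ + gaussianWeight σ (2 * Δ)) /
      (4 * gaussianWeight σ Δ)) atTop (𝓝 (3 / 4)) := by
    simpa only [one_mul] using
      tendsto_add_gaussianWeight_mul_div (c := 2) hσ.ne' (by norm_num) 3 1 4
  refine ⟨h_ratio, fun ε hε => eventually_atTop.1 ?_⟩
  have h_pos : ∀ᶠ Δ in atTop, 0 < 4 * gaussianWeight σ Δ :=
    .of_forall fun Δ => mul_pos four_pos (gaussianWeight_pos σ Δ)
  simp only [← gaussianWeight_two_mul]
  exact eventually_le_mul_of_tendsto_div h_ratio h_pos (lt_add_of_pos_right _ hε)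
end

section
/- Let n ≥ 1, let x₁ ≤ x₂ ≤ … ≤ xₙ be real numbers, and let g : ℝ → ℝ be a monotone non-increasing function with g ≥ 0. Then for every spanning tree T of the complete graph on {1,…,n}, the total weight Σ_{(u,v) edge of T} g(|x_u − x_v|) is at most Σ_{i=1}^{n−1} g(x_{i+1} − x_i). In other words, the path x₁ − x₂ − … − xₙ is a maximum-weight spanning tree under any monotone distance-based similarity measure on the line (and hence single-linkage merges exactly the consecutive intervals, in increasing order of length). -/
/-!
A tree is a basis of the graphic matroid, so any set of edges that spans `k` of its edges has at
least `k` elements. Hence, if every edge `e` of a tree `T` is spanned by the edges of a tree `H`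
that weigh at least as much as `e`, Hall's marriage theorem gives an injection from the edges of `T`
to those of `H` which never decreases the weight. Both trees have `|V| - 1` edges, so the injection
is a bijection and `T` weighs at most as much as `H`. On the line, the edge joining `u ≤ v` is
spanned by the consecutive steps between `u` and `v`, which are no longer than the edge itself.
-/

open Finset SimpleGraph

section EdgeSpan

variable {V : Type*}

/-- The closure of `F` in the graphic matroid on `V`: the pairs whose two endpoints are joined by
a walk with edges in `F`. It contains every diagonal pair. -/
def edgeSpan (F : Set (Sym2 V)) : Set (Sym2 V) :=
  Sym2.fromRel (r := (fromEdgeSet F).Reachable) ⟨fun _ _ h => h.symm⟩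

theorem mk_mem_edgeSpan {F : Set (Sym2 V)} {u v : V} :
    s(u, v) ∈ edgeSpan F ↔ (fromEdgeSet F).Reachable u v :=
  Iff.rfl

theorem mk_mem_edgeSpan_iff_reflTransGen {F : Set (Sym2 V)} {u v : V} :
    s(u, v) ∈ edgeSpan F ↔ Relation.ReflTransGen (fun a b => s(a, b) ∈ F) u v := by
  rw [mk_mem_edgeSpan, reachable_fromEdgeSet_eq_reflTransGen_toRel]
  rfl

theorem edgeSpan_mono {F F' : Set (Sym2 V)} (h : F ⊆ F') : edgeSpan F ⊆ edgeSpan F' := by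
  rintro ⟨u, v⟩ huv
  exact mk_mem_edgeSpan.2 ((mk_mem_edgeSpan.1 huv).mono (fromEdgeSet_mono h))

theorem subset_edgeSpan (F : Set (Sym2 V)) : F ⊆ edgeSpan F := by
  rintro ⟨u, v⟩ huv
  exact mk_mem_edgeSpan_iff_reflTransGen.2 (.single huv)

theorem connected_fromEdgeSet_of_edgeSet_subset_edgeSpan {G : SimpleGraph V} (hG : G.Connected)
    {F : Set (Sym2 V)} (hF : G.edgeSet ⊆ edgeSpan F) : (fromEdgeSet F).Connected := by
  have := hG.nonempty
  refine ⟨fun u v => ?_⟩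
  obtain ⟨p⟩ := hG.preconnected u v
  induction p with
  | nil => exact .refl _
  | cons huv _ ih => exact (mk_mem_edgeSpan.1 (hF huv)).trans ih

theorem card_vert_le_card_add_one_of_connected_fromEdgeSet {F : Finset (Sym2 V)}
    (hF : (fromEdgeSet (F : Set (Sym2 V))).Connected) : Nat.card V ≤ #F + 1 := by
  refine hF.card_vert_le_card_edgeSet_add_one.trans (Nat.add_le_add_right ?_ 1)
  rw [← Set.ncard_coe_finset, ← Nat.card_coe_set_eq, edgeSet_fromEdgeSet]
  exact Nat.card_mono F.finite_toSet Set.sdiff_subset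

variable [Finite V] {T H : SimpleGraph V}

theorem card_le_card_of_subset_edgeSpan (hT : T.IsTree) {S F : Finset (Sym2 V)}
    (hST : (S : Set (Sym2 V)) ⊆ T.edgeSet) (hSF : (S : Set (Sym2 V)) ⊆ edgeSpan F) : #S ≤ #F := by
  classical
  have := Fintype.ofFinite T.edgeSet
  -- Exchanging `S` for `F` in `T` leaves a connected graph, which has at least `|T|` edges.
  have hspan : T.edgeSet ⊆ edgeSpan ↑(T.edgeFinset \ S ∪ F) := by
    intro e he
    by_cases heS : e ∈ S
    · exact edgeSpan_mono (coe_subset.2 subset_union_right) (hSF heS)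
    · exact subset_edgeSpan _ (by simp [he, heS])
  have hcard : Nat.card V ≤ #(T.edgeFinset \ S ∪ F) + 1 :=
    card_vert_le_card_add_one_of_connected_fromEdgeSet
      (connected_fromEdgeSet_of_edgeSet_subset_edgeSpan hT.connected hspan)
  have hunion : #(T.edgeFinset \ S ∪ F) ≤ #(T.edgeFinset \ S) + #F := card_union_le _ _
  have hsdiff : #(T.edgeFinset \ S) + #S = #T.edgeFinset :=
    card_sdiff_add_card_eq_card fun _ he => mem_edgeFinset.2 (hST he)
  have htree : #T.edgeFinset + 1 = Nat.card V := by
    rw [edgeFinset_card, ← Nat.card_eq_fintype_card, (isTree_iff_connected_and_card.1 hT).2]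
  lia

theorem exists_injective_forall_mem_of_mem_edgeSpan (hT : T.IsTree)
    (P : T.edgeSet → Finset (Sym2 V)) (hP : ∀ e, (e : Sym2 V) ∈ edgeSpan (P e)) :
    ∃ f : T.edgeSet → Sym2 V, f.Injective ∧ ∀ e, f e ∈ P e := by
  classical
  refine (all_card_le_biUnion_card_iff_exists_injective P).1 fun S => ?_
  rw [← card_map (Function.Embedding.subtype _)]
  refine card_le_card_of_subset_edgeSpan hT ?_ ?_
  · intro e he
    obtain ⟨a, -, rfl⟩ := mem_map.1 he
    exact a.2
  · intro e he
    obtain ⟨a, ha, rfl⟩ := mem_map.1 he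
    exact edgeSpan_mono (coe_subset.2 (subset_biUnion_of_mem P ha)) (hP a)

theorem sum_edgeFinset_le_of_mem_edgeSpan {M : Type*} [AddCommMonoid M] [PartialOrder M]
    [IsOrderedAddMonoid M] [Fintype T.edgeSet] [Fintype H.edgeSet] (hT : T.IsTree) (hH : H.IsTree)
    {w : Sym2 V → M} (hw : ∀ e ∈ T.edgeSet, e ∈ edgeSpan {f ∈ H.edgeSet | w e ≤ w f}) :
    ∑ e ∈ T.edgeFinset, w e ≤ ∑ e ∈ H.edgeFinset, w e := by
  classical
  obtain ⟨f, hf, hfP⟩ := exists_injective_forall_mem_of_mem_edgeSpan hT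
    (fun e => {f ∈ H.edgeFinset | w e ≤ w f}) fun e => by simpa using hw e e.2
  have hfH : ∀ e, f e ∈ H.edgeFinset := fun e => (mem_filter.1 (hfP e)).1
  have hwf : ∀ e : T.edgeSet, w e ≤ w (f e) := fun e => (mem_filter.1 (hfP e)).2
  have himage : univ.image f = H.edgeFinset := by
    refine eq_of_subset_of_card_le (by simpa [image_subset_iff] using hfH) ?_
    have := (isTree_iff_connected_and_card.1 hT).2
    have := (isTree_iff_connected_and_card.1 hH).2
    rw [card_image_of_injective _ hf, card_univ, edgeFinset_card, ← Nat.card_eq_fintype_card,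
      ← Nat.card_eq_fintype_card]
    lia
  calc ∑ e ∈ T.edgeFinset, w e
      = ∑ e : T.edgeSet, w e := sum_subtype _ (fun _ => mem_edgeFinset) w
    _ ≤ ∑ e : T.edgeSet, w (f e) := sum_le_sum fun e _ => hwf e
    _ = ∑ e ∈ univ.image f, w e := (sum_image hf.injOn).symm
    _ = ∑ e ∈ H.edgeFinset, w e := by rw [himage]

end EdgeSpan

section PathGraph

theorem mk_mem_edgeSpan_hasse_of_le {V : Type*} [LinearOrder V] [SuccOrder V] [IsSuccArchimedean V]
    {u v : V} (huv : u ≤ v) :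
    s(u, v) ∈ edgeSpan {e ∈ (hasse V).edgeSet | ∃ a b, u ≤ a ∧ a ≤ b ∧ b ≤ v ∧ e = s(a, b)} := by
  refine mk_mem_edgeSpan_iff_reflTransGen.2 (reflTransGen_of_succ_of_le _ (fun a ha => ?_) huv)
  have hcov : a ⋖ Order.succ a := Order.covBy_succ_of_not_isMax ha.2.not_isMax
  exact ⟨.inl hcov, a, Order.succ a, ha.1, hcov.le, Order.succ_le_of_lt ha.2, rfl⟩

variable (n : ℕ)

theorem injective_mk_castSucc_succ :
    (fun i : Fin n => s(i.castSucc, i.succ)).Injective := by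
  intro i j hij
  simp only [Sym2.eq_iff, Fin.ext_iff, Fin.val_castSucc, Fin.val_succ] at hij
  lia

theorem edgeFinset_pathGraph_succ [Fintype (pathGraph (n + 1)).edgeSet] :
    (pathGraph (n + 1)).edgeFinset =
      univ.map ⟨fun i : Fin n => s(i.castSucc, i.succ), injective_mk_castSucc_succ n⟩ := by
  ext ⟨u, v⟩
  simp only [mem_edgeFinset, mem_edgeSet, pathGraph_adj, mem_map, mem_univ, true_and,
    Function.Embedding.coeFn_mk, Sym2.eq_iff, Fin.ext_iff, Fin.val_castSucc, Fin.val_succ]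
  constructor
  · rintro (h | h)
    · exact ⟨⟨u, by lia⟩, .inl ⟨rfl, h⟩⟩
    · exact ⟨⟨v, by lia⟩, .inr ⟨rfl, h⟩⟩
  · rintro ⟨i, h⟩
    lia

theorem isTree_pathGraph_succ : (pathGraph (n + 1)).IsTree := by
  classical
  refine isTree_iff_connected_and_card.2 ⟨pathGraph_connected n, ?_⟩
  rw [Nat.card_eq_fintype_card, ← edgeFinset_card, edgeFinset_pathGraph_succ, card_map, card_univ,
    Fintype.card_fin, Nat.card_fin]

end PathGraph

section LineSimilarity

variable {V α M : Type*} [AddCommGroup α] [LinearOrder α] [IsOrderedAddMonoid α]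

/-- The distance-based similarity `g |x u - x v|` of the points `x u` and `x v`, as an edge weight
on the complete graph on `V`. -/
def lineSimilarity (g : α → M) (x : V → α) : Sym2 V → M :=
  Sym2.lift ⟨fun u v => g |x u - x v|, fun u v => by simp only [abs_sub_comm]⟩

theorem lineSimilarity_mk_of_le [Preorder V] (g : α → M) {x : V → α} (hx : Monotone x) {u v : V}
    (huv : u ≤ v) : lineSimilarity g x s(u, v) = g (x v - x u) := by
  change g |x u - x v| = g (x v - x u)
  rw [abs_sub_comm, abs_of_nonneg (sub_nonneg.2 (hx huv))]

theorem lineSimilarity_le_of_le [Preorder V] [Preorder M] {g : α → M}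
    (hg : AntitoneOn g (Set.Ici 0)) {x : V → α} (hx : Monotone x) {u a b v : V} (hua : u ≤ a)
    (hab : a ≤ b) (hbv : b ≤ v) : lineSimilarity g x s(u, v) ≤ lineSimilarity g x s(a, b) := by
  have hlen : x b - x a ≤ x v - x u := sub_le_sub (hx hbv) (hx hua)
  have hnonneg : 0 ≤ x b - x a := sub_nonneg.2 (hx hab)
  rw [lineSimilarity_mk_of_le g hx (hua.trans (hab.trans hbv)), lineSimilarity_mk_of_le g hx hab]
  exact hg hnonneg (hnonneg.trans hlen) hlen

theorem mem_edgeSpan_hasse_lineSimilarity_le [LinearOrder V] [SuccOrder V] [IsSuccArchimedean V]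
    [Preorder M] {g : α → M} (hg : AntitoneOn g (Set.Ici 0)) {x : V → α} (hx : Monotone x)
    (e : Sym2 V) :
    e ∈ edgeSpan {f ∈ (hasse V).edgeSet | lineSimilarity g x e ≤ lineSimilarity g x f} := by
  induction e with | _ u v
  wlog huv : u ≤ v generalizing u v
  · rw [Sym2.eq_swap]
    exact this v u (le_of_not_ge huv)
  refine edgeSpan_mono ?_ (mk_mem_edgeSpan_hasse_of_le huv)
  rintro _ ⟨hadj, a, b, hua, hab, hbv, rfl⟩
  exact ⟨hadj, lineSimilarity_le_of_le hg hx hua hab hbv⟩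

theorem stmt15_general [AddCommMonoid M] [PartialOrder M] [IsOrderedAddMonoid M] {n : ℕ}
    {x : Fin (n + 1) → α} (hx : Monotone x) {g : α → M} (hg : AntitoneOn g (Set.Ici 0))
    {T : SimpleGraph (Fin (n + 1))} [Fintype T.edgeSet] (hT : T.IsTree) :
    ∑ e ∈ T.edgeFinset, lineSimilarity g x e ≤ ∑ i : Fin n, g (x i.succ - x i.castSucc) := by
  classical
  calc ∑ e ∈ T.edgeFinset, lineSimilarity g x e
      ≤ ∑ e ∈ (pathGraph (n + 1)).edgeFinset, lineSimilarity g x e :=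
        sum_edgeFinset_le_of_mem_edgeSpan hT (isTree_pathGraph_succ n) fun e _ =>
          mem_edgeSpan_hasse_lineSimilarity_le hg hx e
    _ = ∑ i : Fin n, lineSimilarity g x s(i.castSucc, i.succ) := by
        rw [edgeFinset_pathGraph_succ, sum_map, Function.Embedding.coeFn_mk]
    _ = ∑ i : Fin n, g (x i.succ - x i.castSucc) :=
        sum_congr rfl fun i _ => lineSimilarity_mk_of_le g hx i.castSucc_lt_succ.le

end LineSimilarity

theorem stmt15 (n : ℕ) (x : Fin (n + 1) → ℝ) (hx : Monotone x)
    (g : ℝ → ℝ) (hg : Antitone g) (hg0 : ∀ t, 0 ≤ g t)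
    (T : SimpleGraph (Fin (n + 1))) [DecidableRel T.Adj] (hT : T.IsTree) :
    ∑ e ∈ T.edgeFinset,
        Sym2.lift ⟨fun u v => g |x u - x v|,
          fun u v => by simp only [abs_sub_comm (x u) (x v)]⟩ e
      ≤ ∑ i : Fin n, g (x i.succ - x i.castSucc) :=
  stmt15_general hx (hg.antitoneOn _) hT
end
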